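/- Let G be a locally finite connected simple graph and (x,y) an edge of G such that no cycle of length 3, 4, or 5 in G passes through the edge (x,y). Then κ(x,y) = −2·max(0, 1 − 1/deg(x) − 1/deg(y)). In particular this formula holds for every edge whenever the girth of G is at least 6. -/

import Mathlib

open SimpleGraph

def Lip {V : Type*} (G : SimpleGraph V) (f : V → ℝ) : Prop :=
  ∀ a b : V, |f a - f b| ≤ (G.dist a b : ℝ)

noncomputable def deg {V : Type*} (G : SimpleGraph V) (x : V) : ℕ :=
  (G.neighborSet x).ncard

noncomputable def Ef {V : Type*} (G : SimpleGraph V) (x : V) (f : V → ℝ) : ℝ :=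
  (∑ᶠ z ∈ G.neighborSet x, f z) / (deg G x)

noncomputable def kappa {V : Type*} (G : SimpleGraph V) (x y : V) : ℝ :=
  1 - sSup {t : ℝ | ∃ f : V → ℝ, Lip G f ∧ t = Ef G x f - Ef G y f}

/-!
Write `p = 1 / deg x`, `q = 1 / deg y` and `c = 1 - p - q`. A 1-Lipschitz `f` is at most `f x + 1`
on the neighbors of `x` and at least `f y - 1` on those of `y`, so
`E_x f - E_y f ≤ 1 + c + c (f x - f y)`, hence `κ ≥ -2 max(0, c)` on every edge. Two functions show
that this is sharp. The indicator of `N(x)` gives `κ ≤ 0` as soon as no triangle contains the edge.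
Minus the distance to `N(x) \ {y}` gives `κ ≤ -2c` as soon as `N(x) \ {y}` and `N(y) \ {x}` are at
distance `3`; a shorter connection between them would close up, through `x` and `y`, to a cycle of
length at most `5`.
-/

section Curvature

variable {V : Type*} {G : SimpleGraph V} {x y : V} {f : V → ℝ}

lemma Lip.abs_sub_le_one (hf : Lip G f) {a b : V} (h : G.Adj a b) : |f a - f b| ≤ 1 := by
  simpa [dist_eq_one_iff_adj.mpr h] using hf a b

lemma one_le_deg (hx : (G.neighborSet x).Finite) (h : G.Adj x y) : 1 ≤ deg G x :=
  (Set.ncard_pos hx).mpr ⟨y, h⟩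

lemma Ef_neg (x : V) (f : V → ℝ) : Ef G x (-f) = -Ef G x f := by
  simp only [Ef, Pi.neg_apply, finsum_neg_distrib, neg_div]

lemma Ef_le (hx : (G.neighborSet x).Finite) (h : G.Adj x y) {M : ℝ}
    (hM : ∀ z ∈ G.neighborSet x \ {y}, f z ≤ M) :
    Ef G x f ≤ 1 / deg G x * f y + (1 - 1 / deg G x) * M := by
  classical
  have hdeg : (1 : ℝ) ≤ deg G x := by exact_mod_cast one_le_deg hx h
  have hy : y ∈ hx.toFinset := by simpa using h
  have hcard : ((hx.toFinset.erase y).card : ℝ) = deg G x - 1 := by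
    rw [Finset.cast_card_erase_of_mem hy, deg, Set.ncard_eq_toFinset_card _ hx]
  have hsum : ∑ z ∈ hx.toFinset.erase y, f z ≤ (deg G x - 1) * M := by
    rw [← hcard, ← nsmul_eq_mul]
    refine Finset.sum_le_card_nsmul _ _ _ fun z hz => ?_
    rw [Finset.mem_erase, Set.Finite.mem_toFinset] at hz
    exact hM z ⟨hz.2, hz.1⟩
  calc Ef G x f = (f y + ∑ z ∈ hx.toFinset.erase y, f z) / deg G x := by
        rw [Ef, finsum_mem_eq_finite_toFinset_sum _ hx, Finset.add_sum_erase _ _ hy]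
    _ ≤ (f y + (deg G x - 1) * M) / deg G x := by gcongr
    _ = 1 / deg G x * f y + (1 - 1 / deg G x) * M := by field_simp

lemma le_Ef (hx : (G.neighborSet x).Finite) (h : G.Adj x y) {m : ℝ}
    (hm : ∀ z ∈ G.neighborSet x \ {y}, m ≤ f z) :
    1 / deg G x * f y + (1 - 1 / deg G x) * m ≤ Ef G x f := by
  have hneg := Ef_le hx h (f := -f) (M := -m) fun z hz => neg_le_neg (hm z hz)
  rw [Ef_neg, Pi.neg_apply] at hneg
  linarith

lemma Lip.Ef_sub_Ef_le (hf : Lip G f) (hx : (G.neighborSet x).Finite)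
    (hy : (G.neighborSet y).Finite) (h : G.Adj x y) :
    Ef G x f - Ef G y f ≤ 1 + 2 * max 0 (1 - 1 / (deg G x : ℝ) - 1 / (deg G y : ℝ)) := by
  have hEx := Ef_le hx h (f := f) (M := f x + 1) fun z hz => by
    linarith [(abs_le.mp (hf.abs_sub_le_one hz.1)).1]
  have hEy := le_Ef hy h.symm (f := f) (m := f y - 1) fun w hw => by
    linarith [(abs_le.mp (hf.abs_sub_le_one hw.1)).2]
  set c : ℝ := 1 - 1 / deg G x - 1 / deg G y with hc
  calc Ef G x f - Ef G y f ≤ 1 + c + c * (f x - f y) := by rw [hc]; linarith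
    _ ≤ 1 + c + |c| := by
        gcongr
        calc c * (f x - f y) ≤ |c| * |f x - f y| := (le_abs_self _).trans_eq (abs_mul _ _)
          _ ≤ |c| := mul_le_of_le_one_right (abs_nonneg c) (hf.abs_sub_le_one h)
    _ = 1 + 2 * max 0 c := by
        rcases le_total 0 c with h0 | h0
        · rw [abs_of_nonneg h0, max_eq_right h0]; ring
        · rw [abs_of_nonpos h0, max_eq_left h0]; ring

lemma neg_two_mul_max_le_kappa (hx : (G.neighborSet x).Finite) (hy : (G.neighborSet y).Finite)
    (h : G.Adj x y) :
    -2 * max 0 (1 - 1 / (deg G x : ℝ) - 1 / (deg G y : ℝ)) ≤ kappa G x y := by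
  have hsup : sSup {t : ℝ | ∃ f : V → ℝ, Lip G f ∧ t = Ef G x f - Ef G y f} ≤
      1 + 2 * max 0 (1 - 1 / (deg G x : ℝ) - 1 / (deg G y : ℝ)) := by
    refine csSup_le ⟨_, 0, fun a b => by simp, rfl⟩ ?_
    rintro _ ⟨f, hf, rfl⟩
    exact hf.Ef_sub_Ef_le hx hy h
  rw [kappa]
  linarith

lemma Lip.kappa_le (hf : Lip G f) (hx : (G.neighborSet x).Finite)
    (hy : (G.neighborSet y).Finite) (h : G.Adj x y) :
    kappa G x y ≤ 1 - (Ef G x f - Ef G y f) := by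
  have hbdd : BddAbove {t : ℝ | ∃ f : V → ℝ, Lip G f ∧ t = Ef G x f - Ef G y f} := by
    refine ⟨1 + 2 * max 0 (1 - 1 / (deg G x : ℝ) - 1 / (deg G y : ℝ)), ?_⟩
    rintro _ ⟨g, hg, rfl⟩
    exact hg.Ef_sub_Ef_le hx hy h
  exact sub_le_sub_left (le_csSup hbdd ⟨f, hf, rfl⟩) 1

lemma lip_indicator_one (hG : G.Connected) (S : Set V) : Lip G (S.indicator 1) := by
  classical
  intro a b
  rcases eq_or_ne a b with rfl | hab
  · simp
  · have hdist : (1 : ℝ) ≤ G.dist a b := by exact_mod_cast hG.pos_dist_of_ne hab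
    refine le_trans ?_ hdist
    simp only [Set.indicator_apply, Pi.one_apply]
    split_ifs <;> norm_num

lemma kappa_nonpos_of_disjoint_neighborSet (hG : G.Connected) (hx : (G.neighborSet x).Finite)
    (hy : (G.neighborSet y).Finite) (h : G.Adj x y)
    (hdisj : Disjoint (G.neighborSet x) (G.neighborSet y)) : kappa G x y ≤ 0 := by
  set f : V → ℝ := (G.neighborSet x).indicator 1
  have one_of_adj : ∀ z ∈ G.neighborSet x, f z = 1 := fun z hz => Set.indicator_of_mem hz 1
  have zero_of_adj : ∀ w ∈ G.neighborSet y, f w = 0 := fun w hw =>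
    Set.indicator_of_notMem (hdisj.notMem_of_mem_right hw) 1
  have hEx := le_Ef hx h fun z hz => (one_of_adj z hz.1).ge
  have hEy := Ef_le hy h.symm fun w hw => (zero_of_adj w hw.1).le
  rw [one_of_adj y h] at hEx
  rw [zero_of_adj x h.symm] at hEy
  linarith [(lip_indicator_one hG (G.neighborSet x)).kappa_le hx hy h]

/-- The graph distance of a connected graph as a metric, which makes `Metric.infDist` available.
It is not an instance, as the vertex type does not determine the graph. -/
noncomputable abbrev graphMetric (hG : G.Connected) : PseudoMetricSpace V where
  dist a b := G.dist a b
  dist_self a := by simp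
  dist_comm a b := by rw [dist_comm]
  dist_triangle a b c := by exact_mod_cast hG.dist_triangle

lemma lip_neg_infDist (hG : G.Connected) (S : Set V) :
    letI := graphMetric hG
    Lip G fun v => -Metric.infDist v S := by
  let := graphMetric hG
  intro a b
  rw [neg_sub_neg, abs_sub_comm, ← Real.dist_eq]
  exact ((Metric.lipschitz_infDist_pt S).dist_le_mul a b).trans_eq (one_mul _)

lemma kappa_le_of_three_le_dist (hG : G.Connected) (hx : (G.neighborSet x).Finite)
    (hy : (G.neighborSet y).Finite) (h : G.Adj x y) (hne : (G.neighborSet x \ {y}).Nonempty)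
    (hdist : ∀ z ∈ G.neighborSet x \ {y}, ∀ w ∈ G.neighborSet y \ {x}, 3 ≤ G.dist z w) :
    kappa G x y ≤ -2 * (1 - 1 / (deg G x : ℝ) - 1 / (deg G y : ℝ)) := by
  let := graphMetric hG
  set A := G.neighborSet x \ {y}
  set f : V → ℝ := fun v => -Metric.infDist v A
  have f_far : ∀ w ∈ G.neighborSet y \ {x}, f w ≤ -3 := fun w hw =>
    neg_le_neg <| (Metric.le_infDist hne).mpr fun z hz => by
      rw [_root_.dist_comm]
      exact Nat.ofNat_le_cast.mpr (hdist z hz w hw)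
  have f_near : ∀ z ∈ A, 0 ≤ f z := fun z hz =>
    neg_nonneg.mpr (Metric.infDist_zero_of_mem hz).le
  have f_x : f x ≤ -1 := neg_le_neg <| (Metric.le_infDist hne).mpr fun z hz =>
    Nat.one_le_cast.mpr (dist_eq_one_iff_adj.mpr hz.1).ge
  have f_y : -2 ≤ f y := by
    obtain ⟨z, hz⟩ := hne
    have hyz : G.dist y z ≤ 2 := dist_le (.cons h.symm (.cons hz.1 .nil))
    exact neg_le_neg <| (Metric.infDist_le_dist_of_mem hz).trans (Nat.cast_le_ofNat.mpr hyz)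
  have hEx : 1 / deg G x * -2 ≤ Ef G x f := calc
    1 / deg G x * (-2 : ℝ) ≤ 1 / deg G x * f y + (1 - 1 / deg G x) * 0 := by
      rw [mul_zero, add_zero]; gcongr
    _ ≤ Ef G x f := le_Ef hx h f_near
  have hEy : Ef G y f ≤ 1 / deg G y * -1 + (1 - 1 / deg G y) * -3 :=
    (Ef_le hy h.symm f_far).trans (by gcongr)
  linarith [(lip_neg_infDist hG A).kappa_le hx hy h]

lemma kappa_eq_of_three_le_dist (hG : G.Connected) (hx : (G.neighborSet x).Finite)
    (hy : (G.neighborSet y).Finite) (h : G.Adj x y)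
    (hdist : ∀ z ∈ G.neighborSet x \ {y}, ∀ w ∈ G.neighborSet y \ {x}, 3 ≤ G.dist z w) :
    kappa G x y = -2 * max 0 (1 - 1 / (deg G x : ℝ) - 1 / (deg G y : ℝ)) := by
  refine le_antisymm ?_ (neg_two_mul_max_le_kappa hx hy h)
  rcases le_or_gt (1 - 1 / (deg G x : ℝ) - 1 / (deg G y : ℝ)) 0 with hc | hc
  · have hdisj : Disjoint (G.neighborSet x) (G.neighborSet y) :=
      Set.disjoint_left.mpr fun v hxv hyv => by
        simpa using hdist v ⟨hxv, hyv.ne'⟩ v ⟨hyv, hxv.ne'⟩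
    rw [max_eq_left hc, mul_zero]
    exact kappa_nonpos_of_disjoint_neighborSet hG hx hy h hdisj
  · have hdeg : 1 < deg G x := by
      by_contra! hle
      have hone : deg G x = 1 := le_antisymm hle (one_le_deg hx h)
      have hnonneg : 0 ≤ 1 / (deg G y : ℝ) := by positivity
      rw [hone, Nat.cast_one, div_one] at hc
      linarith
    obtain ⟨z, hz, hzy⟩ := Set.exists_ne_of_one_lt_ncard hdeg y
    rw [max_eq_right hc.le]
    exact kappa_le_of_three_le_dist hG hx hy h ⟨z, hz, hzy⟩ hdist

end Curvature

section ShortCycles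

variable {V : Type*} {G : SimpleGraph V} {x y : V}

lemma exists_isCycle_length_le (h : G.Adj x y) (p : G.Walk y x) (hp : s(x, y) ∉ p.edges) :
    ∃ c : G.Walk x x, c.IsCycle ∧ s(x, y) ∈ c.edges ∧ c.length ≤ p.length + 1 := by
  classical
  refine ⟨.cons h p.bypass, ?_, by simp, by simpa using p.length_bypass_le_length⟩
  exact (Walk.cons_isCycle_iff _ h).mpr
    ⟨p.bypass_isPath, fun hmem => hp (p.edges_bypass_subset_edges hmem)⟩

lemma mem_or_mem_of_mem_edges_of_length_le_two {u v : V} (p : G.Walk u v) (hp : p.length ≤ 2)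
    {e : Sym2 V} (he : e ∈ p.edges) : u ∈ e ∨ v ∈ e := by
  match p with
  | .nil => simp at he
  | .cons _ .nil => simp_all
  | .cons _ (.cons _ .nil) =>
    simp only [Walk.edges_cons, Walk.edges_nil, List.mem_cons, List.not_mem_nil, or_false] at he
    rcases he with rfl | rfl <;> simp
  | .cons _ (.cons _ (.cons _ _)) => simp at hp

lemma three_le_dist_of_six_le_cycle_length (h : G.Adj x y)
    (hcyc : ∀ (u : V) (c : G.Walk u u), c.IsCycle → s(x, y) ∈ c.edges → 6 ≤ c.length)
    {z w : V} (hz : z ∈ G.neighborSet x \ {y}) (hw : w ∈ G.neighborSet y \ {x}) :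
    3 ≤ G.dist z w := by
  obtain ⟨hxz : G.Adj x z, hzy : z ≠ y⟩ := hz
  obtain ⟨hyw : G.Adj y w, hwx : w ≠ x⟩ := hw
  by_contra! hlt
  have hzw : G.Reachable z w :=
    hxz.symm.reachable.trans (h.reachable.trans hyw.reachable)
  obtain ⟨p, hp⟩ := hzw.symm.exists_walk_length_eq_dist
  rw [dist_comm] at hp
  have hxy : s(x, y) ∉ p.edges := fun hmem => by
    have := mem_or_mem_of_mem_edges_of_length_le_two p (by lia) hmem
    simp [hxz.ne', hzy, hwx, hyw.ne'] at this
  obtain ⟨c, hc, hmem, hlen⟩ :=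
    exists_isCycle_length_le h (.cons hyw (p.concat hxz.symm))
      (by simp [hxy, hzy.symm, hwx.symm, h.ne, h.ne'])
  have := hcyc x c hc hmem
  simp only [Walk.length_cons, Walk.length_concat] at hlen
  lia

end ShortCycles

theorem kappa_no_short_cycle_general {V : Type*} {G : SimpleGraph V} (hG : G.Connected) {x y : V}
    (hx : (G.neighborSet x).Finite) (hy : (G.neighborSet y).Finite) (h : G.Adj x y)
    (hcyc : ∀ (u : V) (c : G.Walk u u), c.IsCycle → s(x, y) ∈ c.edges → 6 ≤ c.length) :
    kappa G x y = -2 * max 0 (1 - 1 / (deg G x : ℝ) - 1 / (deg G y : ℝ)) :=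
  kappa_eq_of_three_le_dist hG hx hy h fun _ hz _ hw =>
    three_le_dist_of_six_le_cycle_length h hcyc hz hw

/-- If no cycle of length 3, 4 or 5 passes through the edge `(x,y)` of a locally finite
connected graph, then `κ(x,y) = -2 max(0, 1 - 1/deg x - 1/deg y)`; in particular the
formula holds for every edge whenever the girth of `G` is at least 6. -/
theorem kappa_no_short_cycle {V : Type*} (G : SimpleGraph V)
    (hlf : ∀ v : V, (G.neighborSet v).Finite) (hG : G.Connected) :
    (∀ x y : V, G.Adj x y →
      (∀ (u : V) (c : G.Walk u u), c.IsCycle → s(x, y) ∈ c.edges →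
        ¬(c.length = 3 ∨ c.length = 4 ∨ c.length = 5)) →
      kappa G x y =
        -2 * max 0 (1 - 1 / (deg G x : ℝ) - 1 / (deg G y : ℝ))) ∧
    ((6 : ℕ∞) ≤ G.egirth → ∀ x y : V, G.Adj x y →
      kappa G x y =
        -2 * max 0 (1 - 1 / (deg G x : ℝ) - 1 / (deg G y : ℝ))) := by
  refine ⟨fun x y h hshort => ?_, fun hgirth x y h => ?_⟩ <;>
    refine kappa_no_short_cycle_general hG (hlf x) (hlf y) h fun u c hc hmem => ?_
  · have := hshort u c hc hmem
    have := hc.three_le_length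
    lia
  · exact_mod_cast le_egirth.mp hgirth u c hc
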